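/- arXiv:2410.18066 — 2 statements merged into one kernel-verified Lean document; each statement's English description precedes it below -/
import Mathlib

section
/- Proposition 1, part (3) (over-investment in the most important feature under Prelec misperception). Let γ ∈ (0, 1) and let p(z) = exp(−(−log z)^γ) be the Prelec weighting function. Let θ_max ∈ (0, 1) be the largest true feature weight, and suppose the biased agent perceives it as p(θ_max) with p(θ_max) < θ_max. Let d_NB ∈ ℝ and d_B ≥ 0 be the agent's signed distances to the true and perceived decision boundaries, and set δ_max^NB = d_NB·θ_max and δ_max^B = d_B·p(θ_max). If d_NB ≤ exp(γ^{1/(1−γ)} − γ^{γ/(1−γ)})·d_B, then δ_max^NB ≤ δ_max^B. -/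
/-- Proposition 1, part (3): over-investment in the most important feature under
Prelec misperception. -/
theorem over_invest_most_important_feature_prelec
    (γ : ℝ) (hγ : γ ∈ Set.Ioo (0 : ℝ) 1)
    (p : ℝ → ℝ) (hp : ∀ z, p z = Real.exp (-((-Real.log z) ^ γ)))
    (θmax : ℝ) (hθmax : θmax ∈ Set.Ioo (0 : ℝ) 1)
    (hmis : p θmax < θmax)
    (dNB dB : ℝ) (hdB : 0 ≤ dB)
    (δNB δB : ℝ)
    (hδNB : δNB = dNB * θmax) (hδB : δB = dB * p θmax)
    (h : dNB ≤ Real.exp (γ ^ (1 / (1 - γ)) - γ ^ (γ / (1 - γ))) * dB) :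
    δNB ≤ δB := by
  obtain ⟨h0, h1⟩ := hγ
  obtain ⟨hθ0, hθ1⟩ := hθmax
  have ht : 0 < -Real.log θmax := by
    have := Real.log_neg hθ0 hθ1
    linarith
  have hθ : θmax = Real.exp (-(-Real.log θmax)) := by
    rw [neg_neg, Real.exp_log hθ0]
  have hg : (1 - γ) ≠ 0 := by linarith
  have ha : 0 < γ ^ (1 / (1 - γ)) := Real.rpow_pos_of_pos h0 _
  have haγ : (γ ^ (1 / (1 - γ))) ^ γ = γ ^ (γ / (1 - γ)) := by
    rw [← Real.rpow_mul h0.le]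
    congr 1
    ring
  have hab : γ ^ (1 / (1 - γ)) = γ * γ ^ (γ / (1 - γ)) := by
    have e : 1 / (1 - γ) = 1 + γ / (1 - γ) := by
      field_simp
      ring
    rw [e, Real.rpow_add h0, Real.rpow_one]
  have hb : 0 < γ ^ (γ / (1 - γ)) := Real.rpow_pos_of_pos h0 _
  have key : (-Real.log θmax) ^ γ + γ ^ (1 / (1 - γ))
      ≤ γ ^ (γ / (1 - γ)) + (-Real.log θmax) := by
    generalize -Real.log θmax = t at ht
    generalize γ ^ (1 / (1 - γ)) = a at *
    generalize γ ^ (γ / (1 - γ)) = b at *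
    have hs : 0 < t / a := div_pos ht ha
    have e : t = a * (t / a) := by field_simp
    have B := rpow_one_add_le_one_add_mul_self (s := t / a - 1) (by linarith) h0.le h1.le
    rw [add_sub_cancel] at B
    have e2 : t ^ γ = b * (t / a) ^ γ := by
      rw [← haγ, ← Real.mul_rpow ha.le hs.le, ← e]
    have B2 := mul_le_mul_of_nonneg_left B hb.le
    have e3 : b * (1 + γ * (t / a - 1)) = b + t - a := by
      have : b * (1 + γ * (t / a - 1)) = b + (γ * b) * (t / a) - γ * b := by ring
      rw [this, ← hab, ← e]
    linarith
  have hc : Real.exp (γ ^ (1 / (1 - γ)) - γ ^ (γ / (1 - γ))) * θmax ≤ p θmax := by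
    rw [hp]
    calc _ = Real.exp (γ ^ (1 / (1 - γ)) - γ ^ (γ / (1 - γ)) + -(-Real.log θmax)) := by
          rw [Real.exp_add, ← hθ]
      _ ≤ _ := Real.exp_le_exp.mpr (by linarith)
  rw [hδNB, hδB]
  have A := mul_le_mul_of_nonneg_right h hθ0.le
  have C := mul_le_mul_of_nonneg_left hc hdB
  linarith
end

section
/- Maximum distortion of the Prelec weighting function (supporting claim for Proposition 1, part (3)). Let γ ∈ (0, 1) and p(z) = exp(−(−log z)^γ) for z ∈ (0, 1). Then for every z ∈ (0, 1), z/p(z) ≤ exp(γ^{γ/(1−γ)} − γ^{1/(1−γ)}), and equality holds if and only if z = exp(−γ^{1/(1−γ)}). In particular, the function z ↦ z/p(z) on (0, 1) attains its maximum value exp(γ^{γ/(1−γ)} − γ^{1/(1−γ)}) at the unique point z* = exp(−γ^{1/(1−γ)}). -/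
/-- Strict inequality for the exponent. -/
theorem prelec_aux (γ t : ℝ) (h0 : 0 < γ) (h1 : γ < 1) (ht : 0 < t)
    (hne : t ≠ γ ^ (1 / (1 - γ))) :
    t ^ γ - t < γ ^ (γ / (1 - γ)) - γ ^ (1 / (1 - γ)) := by
  have hg : 1 - γ ≠ 0 := by linarith
  have hA : γ ^ (γ / (1 - γ)) = (γ ^ (1 / (1 - γ))) ^ γ := by
    rw [← Real.rpow_mul h0.le]
    congr 1
    ring
  have hB : γ ^ (1 / (1 - γ)) = γ ^ (γ / (1 - γ)) * γ := by
    rw [← Real.rpow_add_one h0.ne']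
    congr 1
    field_simp
    ring
  have ha : 0 < γ ^ (1 / (1 - γ)) := Real.rpow_pos_of_pos h0 _
  have hAp : 0 < γ ^ (γ / (1 - γ)) := Real.rpow_pos_of_pos h0 _
  generalize γ ^ (1 / (1 - γ)) = a at *
  generalize γ ^ (γ / (1 - γ)) = A at *
  have hu : 0 < t / a := div_pos ht ha
  have hs : t / a - 1 ≠ 0 := by
    intro h
    apply hne
    have : t / a = 1 := by linarith
    rwa [div_eq_one_iff_eq ha.ne'] at this
  have hb := rpow_one_add_lt_one_add_mul_self (s := t / a - 1) (by linarith) hs h0 h1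
  rw [add_sub_cancel, Real.div_rpow ht.le ha.le, ← hA, div_lt_iff₀ hAp] at hb
  have h2 : (1 + γ * (t / a - 1)) * A = A - a + t := by
    have : t / a * a = t := div_mul_cancel₀ _ ha.ne'
    linear_combination this + (1 - t / a) * hB
  linarith

/-- Maximum distortion of the Prelec weighting function
(supporting claim for Proposition 1, part (3)). -/
theorem prelec_max_distortion
    (γ : ℝ) (hγ : γ ∈ Set.Ioo (0 : ℝ) 1)
    (p : ℝ → ℝ) (hp : ∀ z, p z = Real.exp (-((-Real.log z) ^ γ))) :
    ∀ z ∈ Set.Ioo (0 : ℝ) 1,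
      z / p z ≤ Real.exp (γ ^ (γ / (1 - γ)) - γ ^ (1 / (1 - γ))) ∧
      (z / p z = Real.exp (γ ^ (γ / (1 - γ)) - γ ^ (1 / (1 - γ))) ↔
        z = Real.exp (-(γ ^ (1 / (1 - γ))))) := by
  rintro z ⟨hz0, hz1⟩
  obtain ⟨h0, h1⟩ := hγ
  have ht : 0 < -Real.log z := by linarith [Real.log_neg hz0 hz1]
  have hz : z / p z = Real.exp ((-Real.log z) ^ γ - (-Real.log z)) := by
    rw [hp, Real.exp_neg, div_inv_eq_mul, sub_neg_eq_add, Real.exp_add, Real.exp_log hz0, mul_comm]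
  have hiff : z = Real.exp (-(γ ^ (1 / (1 - γ)))) ↔ -Real.log z = γ ^ (1 / (1 - γ)) := by
    rw [neg_eq_iff_eq_neg]
    constructor
    · intro h
      rw [h, Real.log_exp]
    · intro h
      rw [← h, Real.exp_log hz0]
  rw [hiff, hz, Real.exp_le_exp, Real.exp_eq_exp]
  by_cases h : -Real.log z = γ ^ (1 / (1 - γ))
  · have hA : (γ ^ (1 / (1 - γ))) ^ γ = γ ^ (γ / (1 - γ)) := by
      rw [← Real.rpow_mul h0.le]
      congr 1
      ring
    rw [h, hA]
    simp
  · have hlt := prelec_aux γ _ h0 h1 ht h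
    exact ⟨hlt.le, fun e => absurd e hlt.ne, fun e => absurd e h⟩
end
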